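/- Let (W, S) be an arbitrary Coxeter system, let w ∈ W_c be fully commutative, and let I = {s, t} ⊆ S be a pair of generators with m(s,t) ≥ 3. If ^*w (respectively _*w, w^*, w_*) is defined, then ^*w (respectively _*w, w^*, w_*) lies in W_c. -/

import Mathlib

open CoxeterSystem

variable {B W : Type*} [Group W] {M : CoxeterMatrix B} (cs : CoxeterSystem M W)

/-- `m(s,t) ≥ 3`: `s` and `t` are distinct noncommuting generators
(`M s t = 0` encodes `m(s,t) = ∞`). -/
def Noncomm (M : CoxeterMatrix B) (s t : B) : Prop := M s t = 0 ∨ 3 ≤ M s t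

/-- The longest element `w_{st}` of the rank-2 parabolic subgroup `⟨s,t⟩`
(meaningful when `3 ≤ M s t < ∞`). -/
def longest (s t : B) : W := cs.wordProd (alternatingWord s t (M s t))

/-- `w` is complex: it admits a reduced factorization `x₁ · w_{st} · x₂` where `w_{st}`
is the longest element of a rank-2 parabolic subgroup `⟨s,t⟩` with `3 ≤ m(s,t) < ∞`. -/
def IsComplex (w : W) : Prop :=
  ∃ s t : B, 3 ≤ M s t ∧ ∃ x₁ x₂ : W,
    w = x₁ * longest cs s t * x₂ ∧
    cs.length w = cs.length x₁ + cs.length (longest cs s t : W) + cs.length x₂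

/-- `w` is fully commutative, i.e. `w ∈ W_c`. -/
def FullyComm (w : W) : Prop := ¬ IsComplex cs w

/-- `x` is weakly complex: `x` is complex and `x = s·u` reduced with `u` fully commutative. -/
def IsWeaklyComplex (x : W) : Prop :=
  IsComplex cs x ∧ ∃ (s : B) (u : W), FullyComm cs u ∧ x = cs.simple s * u ∧
    cs.length x = 1 + cs.length u

/-- The alternating product `t s t s ⋯` with `k` factors, beginning with `t`. -/
def altProd (t s : B) (k : ℕ) : W :=
  cs.wordProd ((List.range k).map (fun i => if i % 2 = 0 then t else s))

/-- The left descent set `𝓛(w)`. -/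
def leftDescents (w : W) : Set B := {i | cs.IsLeftDescent w i}

/-- The right descent set `𝓡(w)`. -/
def rightDescents (w : W) : Set B := {i | cs.IsRightDescent w i}

/-- `w` is a reduced product of distinct pairwise commuting generators. -/
def IsCommProd (w : W) : Prop :=
  ∃ l : List B, l.Nodup ∧ (∀ u ∈ l, ∀ u' ∈ l, u ≠ u' → M u u' = 2) ∧
    cs.IsReduced l ∧ w = cs.wordProd l

/-- `y` is left star reducible to `x` with respect to the pair `{s,t}`:
`x` and `y` lie in the same left `{s,t}`-string and `ℓ(x) = ℓ(y) − 1`. -/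
def LeftStarReducible (s t : B) (y x : W) : Prop :=
  Noncomm M s t ∧
  ((cs.IsLeftDescent y s ∧ ¬ cs.IsLeftDescent y t ∧ x = cs.simple s * y ∧
      cs.IsLeftDescent x t) ∨
   (cs.IsLeftDescent y t ∧ ¬ cs.IsLeftDescent y s ∧ x = cs.simple t * y ∧
      cs.IsLeftDescent x s))

/-- `y` is right star reducible to `x` with respect to the pair `{s,t}`. -/
def RightStarReducible (s t : B) (y x : W) : Prop :=
  Noncomm M s t ∧
  ((cs.IsRightDescent y s ∧ ¬ cs.IsRightDescent y t ∧ x = y * cs.simple s ∧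
      cs.IsRightDescent x t) ∨
   (cs.IsRightDescent y t ∧ ¬ cs.IsRightDescent y s ∧ x = y * cs.simple t ∧
      cs.IsRightDescent x s))

/-- `y` is star reducible to `x`: there is a (possibly empty) chain of left and right
star reductions from `y` to `x`. -/
def StarReducible (y x : W) : Prop :=
  Relation.ReflTransGen
    (fun a b => ∃ s t : B, LeftStarReducible cs s t a b ∨ RightStarReducible cs s t a b) y x

/-- Property F: every fully commutative element is star reducible to a reduced product of
distinct pairwise commuting generators. -/
def PropertyF : Prop := ∀ w : W, FullyComm cs w → ∃ x : W, StarReducible cs w x ∧ IsCommProd cs x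

/-- `n(w)`: the maximum `k` such that `w` admits a reduced factorization `w = w₁·w₂·w₃`
with `w₂` a reduced product of `k` distinct pairwise commuting generators. -/
noncomputable def nval (w : W) : ℕ :=
  sSup {k | ∃ w₁ w₂ w₃ : W, w = w₁ * w₂ * w₃ ∧
    cs.length w = cs.length w₁ + cs.length w₂ + cs.length w₃ ∧
    IsCommProd cs w₂ ∧ cs.length w₂ = k}

/-- The Bruhat order: `x ≤ w` iff some reduced word for `w` has a subword that is a
reduced word for `x`. -/
def BruhatLE (x w : W) : Prop :=
  ∃ l l' : List B, cs.IsReduced l ∧ cs.wordProd l = w ∧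
    l'.Sublist l ∧ cs.IsReduced l' ∧ cs.wordProd l' = x

/-- `w = wI · wII` is the coset decomposition of `w` with respect to `I = {s,t}`:
`wI ∈ W_I`, `𝓛(wII) ∩ I = ∅` and `ℓ(w) = ℓ(wI) + ℓ(wII)`. -/
def CosetDecompL (s t : B) (w wI wII : W) : Prop :=
  w = wI * wII ∧ wI ∈ Subgroup.closure {cs.simple s, cs.simple t} ∧
  ¬ cs.IsLeftDescent wII s ∧ ¬ cs.IsLeftDescent wII t ∧
  cs.length w = cs.length wI + cs.length wII

/-- `w = wII · wI` is the right coset decomposition of `w` with respect to `I = {s,t}`: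
`wI ∈ W_I`, `𝓡(wII) ∩ I = ∅` and `ℓ(w) = ℓ(wII) + ℓ(wI)`. -/
def CosetDecompR (s t : B) (w wII wI : W) : Prop :=
  w = wII * wI ∧ wI ∈ Subgroup.closure {cs.simple s, cs.simple t} ∧
  ¬ cs.IsRightDescent wII s ∧ ¬ cs.IsRightDescent wII t ∧
  cs.length w = cs.length wII + cs.length wI

/-- `k_ε(J) = (−1)^{|J ∩ ε⁻¹(0)|}` for a set `J` of generators. -/
noncomputable def kSet (ε : B → Bool) (J : Set B) : ℤ :=
  (-1) ^ (J ∩ {i | ε i = false}).ncard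

/-- `k_ε(w) = k_ε(𝓛(w)) · k_ε(𝓡(w))`. -/
noncomputable def kElt (ε : B → Bool) (w : W) : ℤ :=
  kSet ε (leftDescents cs w) * kSet ε (rightDescents cs w)


namespace CoxeterMatrix

variable (M)

/-- Twice the pairing with the `i`-th basis vector, for the standard bilinear form
`B(eᵢ, eⱼ) = -cos (π / M i j)` of a Coxeter matrix. With the convention `π / 0 = 0`,
`B(eᵢ, eⱼ) = -1` when `M i j = 0`. -/
noncomputable def simpleCoroot (i : B) : Module.Dual ℝ (B →₀ ℝ) :=
  Finsupp.linearCombination ℝ fun j => -2 * Real.cos (Real.pi / M i j)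

theorem simpleCoroot_single (i j : B) :
    M.simpleCoroot i (Finsupp.single j 1) = -2 * Real.cos (Real.pi / M i j) := by
  simp [simpleCoroot]

theorem simpleCoroot_single_self (i : B) : M.simpleCoroot i (Finsupp.single i 1) = 2 := by
  simp [simpleCoroot_single]

/-- The reflection by which the `i`-th generator acts in the geometric representation. -/
noncomputable def simpleReflection (i : B) : (B →₀ ℝ) ≃ₗ[ℝ] (B →₀ ℝ) :=
  Module.reflection (M.simpleCoroot_single_self i)

theorem simpleCoroot_trace (i j : B) :
    2 * Real.cos (2 * (Real.pi / M i j)) =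
      M.simpleCoroot i (Finsupp.single j 1) * M.simpleCoroot j (Finsupp.single i 1) - 2 := by
  rw [simpleCoroot_single, simpleCoroot_single, M.symmetric j i, Real.cos_two_mul]
  ring

theorem sin_two_mul_pi_div_pos {m : ℕ} (hm : 3 ≤ m) : 0 < Real.sin (2 * (Real.pi / m)) := by
  have h3 : (3 : ℝ) ≤ m := by exact_mod_cast hm
  have hpi := Real.pi_pos
  apply Real.sin_pos_of_pos_of_lt_pi
  · positivity
  · rw [← mul_div_assoc, div_lt_iff₀ (by linarith)]
    nlinarith

theorem isLiftable_simpleReflection : M.IsLiftable M.simpleReflection := by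
  intro i j
  ext1 z
  rw [simpleReflection, simpleReflection,
    Module.reflection_mul_reflection_pow_apply _ _ _ _ _ (M.simpleCoroot_trace i j)]
  obtain hm | hm | hm | hm : M i j = 0 ∨ M i j = 1 ∨ M i j = 2 ∨ 3 ≤ M i j := by omega
  · simp [hm]
  · have hij : i = j := by
      by_contra h
      exact M.off_diagonal i j h hm
    subst hij
    simp [Real.cos_two_pi, simpleCoroot_single_self, -Finsupp.smul_single, sub_smul, mul_smul]
    module
  · have h : 2 * (Real.pi / (2 : ℝ)) = Real.pi := by ring
    simp [hm, simpleCoroot_single, M.symmetric j i, h]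
    module
  · have hs := sin_two_mul_pi_div_pos hm
    have hS := Polynomial.Chebyshev.S_two_mul_real_cos (2 * (Real.pi / M i j))
    have hm0 : (M i j : ℝ) ≠ 0 := by positivity
    set m := M i j
    set φ := 2 * (Real.pi / m)
    have hmφ : m * φ = 2 * Real.pi := by simp only [φ]; field_simp
    rcases Nat.even_or_odd' m with ⟨k, hk | hk⟩
    · have hS0 : (Polynomial.Chebyshev.S ℝ (k - 1)).eval (2 * Real.cos φ) = 0 := by
        have h : (k : ℝ) * φ = Real.pi := by rw [hk] at hmφ; push_cast at hmφ; linarith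
        have := hS (k - 1)
        push_cast at this
        rw [sub_add_cancel, h, Real.sin_pi] at this
        exact (mul_eq_zero.mp this).resolve_right hs.ne'
      rw [show ((m : ℤ) - 2) / 2 = k - 1 by omega, show ((m : ℤ) - 1) / 2 = k - 1 by omega, hS0]
      simp
    · have hS0 : (Polynomial.Chebyshev.S ℝ k).eval (2 * Real.cos φ) +
          (Polynomial.Chebyshev.S ℝ (k - 1)).eval (2 * Real.cos φ) = 0 := by
        have h : ((k : ℝ) + 1) * φ = 2 * Real.pi - k * φ := by
          rw [hk] at hmφ; push_cast at hmφ; linarith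
        have h1 := hS k
        have h2 := hS (k - 1)
        push_cast at h1 h2
        rw [sub_add_cancel] at h2
        rw [h, Real.sin_two_pi_sub] at h1
        have : ((Polynomial.Chebyshev.S ℝ k).eval (2 * Real.cos φ) +
          (Polynomial.Chebyshev.S ℝ (k - 1)).eval (2 * Real.cos φ)) * Real.sin φ = 0 := by
          linarith
        exact (mul_eq_zero.mp this).resolve_right hs.ne'
      rw [show ((m : ℤ) - 2) / 2 = k - 1 by omega, show ((m : ℤ) - 1) / 2 = k by omega,
        show ((m : ℤ) - 3) / 2 = k - 1 by omega, show (m : ℤ) / 2 = k by omega, hS0]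
      simp

theorem simpleReflection_mul_pow_ne_one {i j : B} (hij : i ≠ j) {k : ℕ} (hk : 0 < k)
    (hkM : M i j = 0 ∨ k < M i j) : (M.simpleReflection i * M.simpleReflection j) ^ k ≠ 1 := by
  intro h
  have hx := LinearEquiv.congr_fun h (Finsupp.single i 1)
  rw [simpleReflection, simpleReflection,
    Module.reflection_mul_reflection_pow_apply_self _ _ _ _ (M.simpleCoroot_trace i j)] at hx
  have hi := DFunLike.congr_fun hx i
  have hj := DFunLike.congr_fun hx j
  simp [hij, hij.symm, simpleCoroot_single, M.symmetric j i] at hi hj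
  have h1 := M.off_diagonal i j hij
  obtain hm | hm | hm : M i j = 0 ∨ M i j = 2 ∨ 3 ≤ M i j := by omega
  · simp [hm] at hj
    omega
  · obtain rfl : k = 1 := by omega
    have h : 2 * (Real.pi / (2 : ℝ)) = Real.pi := by ring
    norm_num [hm, h] at hi
  · have hs := sin_two_mul_pi_div_pos hm
    have hS := Polynomial.Chebyshev.S_two_mul_real_cos (2 * (Real.pi / M i j))
    have hkm : (k : ℝ) < M i j := by exact_mod_cast (show k < M i j by omega)
    have h3 : (3 : ℝ) ≤ M i j := by exact_mod_cast hm
    have hk0 : (0 : ℝ) < k := by exact_mod_cast hk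
    have hpi := Real.pi_pos
    have hcos : Real.cos (Real.pi / M i j) ≠ 0 := by
      apply ne_of_gt
      apply Real.cos_pos_of_mem_Ioo
      constructor
      · have : 0 < Real.pi / M i j := by positivity
        linarith
      · rw [div_lt_div_iff₀ (by linarith) (by norm_num)]
        nlinarith
    have hSk : (Polynomial.Chebyshev.S ℝ (k - 1)).eval
        (2 * Real.cos (2 * (Real.pi / M i j))) = 0 := hj.resolve_right hcos
    rw [hSk, add_zero] at hi
    have hmφ : M i j * (2 * (Real.pi / M i j)) = 2 * Real.pi := by field_simp
    set m := M i j
    set φ := 2 * (Real.pi / m)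
    have hφ : 0 < φ := by positivity
    have hsin := hS (k - 1)
    have hsin' := hS k
    push_cast at hsin hsin'
    rw [hSk, sub_add_cancel, zero_mul] at hsin
    rw [hi, one_mul, add_mul, one_mul, Real.sin_add, ← hsin, zero_mul, zero_add] at hsin'
    have hcos1 : Real.cos (k * φ) = 1 := by
      have : Real.sin φ * (Real.cos (k * φ) - 1) = 0 := by linarith
      linarith [(mul_eq_zero.mp this).resolve_left hs.ne']
    have hkφ : k * φ < 2 * Real.pi := by rw [← hmφ]; gcongr
    have := (Real.cos_eq_one_iff_of_lt_of_lt (by nlinarith) hkφ).mp hcos1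
    have : 0 < k * φ := by positivity
    linarith

end CoxeterMatrix

namespace CoxeterSystem

theorem simple_mul_simple_pow_ne_one {i j : B} (hij : i ≠ j) {k : ℕ} (hk : 0 < k)
    (hkM : M i j = 0 ∨ k < M i j) : (cs.simple i * cs.simple j) ^ k ≠ 1 := by
  intro h
  apply M.simpleReflection_mul_pow_ne_one hij hk hkM
  have := congr_arg (cs.lift ⟨_, M.isLiftable_simpleReflection⟩) h
  simpa only [map_pow, map_mul, map_one, cs.lift_apply_simple M.isLiftable_simpleReflection]
    using this

open scoped Classical in
/-- The `i`-th generator acts on signed elements of `W` by conjugation, flipping the sign of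
`cs.simple i`. -/
noncomputable def signedConj (i : B) : Equiv.Perm (W × ZMod 2) :=
  Function.Involutive.toPerm
    (fun p => (cs.simple i * p.1 * cs.simple i, p.2 + if p.1 = cs.simple i then 1 else 0)) <| by
    rintro ⟨r, ε⟩
    have h : cs.simple i * r * cs.simple i = cs.simple i ↔ r = cs.simple i := by
      rw [mul_eq_right, mul_eq_one_iff_inv_eq, inv_simple, eq_comm]
    refine Prod.ext ?_ ?_
    · simp [mul_assoc]
    · simp only [h, add_assoc, CharTwo.add_self_eq_zero, add_zero]

open scoped Classical in
theorem signedConj_apply (i : B) (r : W) (ε : ZMod 2) :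
    cs.signedConj i (r, ε) =
      (cs.simple i * r * cs.simple i, ε + if r = cs.simple i then 1 else 0) := rfl

open scoped Classical in
theorem signedConj_mul_pow_apply (i j : B) (n : ℕ) (r : W) (ε : ZMod 2) :
    ((cs.signedConj i * cs.signedConj j) ^ n) (r, ε) =
      ((cs.simple i * cs.simple j) ^ n * r * ((cs.simple i * cs.simple j) ^ n)⁻¹,
        ε + ∑ k ∈ Finset.range (2 * n),
          if r = cs.simple j * (cs.simple i * cs.simple j) ^ k then 1 else 0) := by
  induction n with
  | zero => simp
  | succ n ih =>
    rw [pow_succ', Equiv.Perm.mul_apply, ih, Equiv.Perm.mul_apply]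
    set c := cs.simple i * cs.simple j with hc
    have hinv : ∀ k : ℕ, (c ^ k)⁻¹ * cs.simple j = cs.simple j * c ^ k := by
      intro k
      have h : c⁻¹ = cs.simple j * c * (cs.simple j)⁻¹ := by simp [hc, mul_assoc]
      rw [← inv_pow, h, conj_pow]
      simp
    have h1 : c ^ n * r * (c ^ n)⁻¹ = cs.simple j ↔ r = cs.simple j * c ^ (2 * n) := by
      rw [mul_inv_eq_iff_eq_mul, ← eq_inv_mul_iff_mul_eq, ← mul_assoc, hinv, mul_assoc, ← pow_add,
        two_mul]
    have h2 : cs.simple j * (c ^ n * r * (c ^ n)⁻¹) * cs.simple j = cs.simple i ↔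
        r = cs.simple j * c ^ (2 * n + 1) := by
      have : cs.simple j * (c ^ n * r * (c ^ n)⁻¹) * cs.simple j = cs.simple i ↔
          c ^ n * r * (c ^ n)⁻¹ = cs.simple j * c := by
        generalize c ^ n * r * (c ^ n)⁻¹ = x
        rw [hc]
        constructor
        · intro h; rw [← h]; simp [mul_assoc]
        · intro h; rw [h]; simp [mul_assoc]
      rw [this, mul_inv_eq_iff_eq_mul, ← eq_inv_mul_iff_mul_eq, ← mul_assoc, ← mul_assoc, hinv,
        mul_assoc, mul_assoc, ← pow_succ', ← pow_add]
      congr! 3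
      ring
    rw [signedConj_apply, signedConj_apply]
    rw [mul_add, mul_one, Finset.sum_range_succ, Finset.sum_range_succ]
    simp only [h1, h2]
    refine Prod.ext ?_ ?_
    · simp [pow_succ', hc, mul_assoc]
    · simp only [add_assoc]

theorem isLiftable_signedConj : M.IsLiftable cs.signedConj := by
  classical
  intro i j
  ext1 ⟨r, ε⟩
  rw [signedConj_mul_pow_apply, two_mul, Finset.sum_range_add]
  simp only [pow_add, simple_mul_simple_pow, one_mul, CharTwo.add_self_eq_zero]
  simp

open scoped Classical in
theorem lift_signedConj_wordProd (ω : List B) (r : W) (ε : ZMod 2) :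
    cs.lift ⟨_, cs.isLiftable_signedConj⟩ (cs.wordProd ω) (r, ε) =
      (cs.wordProd ω * r * (cs.wordProd ω)⁻¹, ε + (cs.rightInvSeq ω).count r) := by
  induction ω with
  | nil => simp
  | cons i ω ih =>
    rw [wordProd_cons, map_mul, lift_apply_simple, Equiv.Perm.mul_apply, ih]
    have h : cs.wordProd ω * r * (cs.wordProd ω)⁻¹ = cs.simple i ↔
        (cs.wordProd ω)⁻¹ * cs.simple i * cs.wordProd ω = r := by
      rw [mul_inv_eq_iff_eq_mul, ← eq_inv_mul_iff_mul_eq, mul_assoc, eq_comm]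
    simp only [signedConj_apply, rightInvSeq, List.count_cons, h, beq_iff_eq]
    refine Prod.ext ?_ ?_
    · simp [mul_assoc]
    · push_cast
      simp only [add_assoc]

/-- The exchange property: a right descent of `cs.wordProd ω` occurs in the right inversion
sequence of `ω`. -/
theorem IsRightDescent.mem_rightInvSeq {cs : CoxeterSystem M W} {ω : List B} {t : B}
    (h : cs.IsRightDescent (cs.wordProd ω) t) : cs.simple t ∈ cs.rightInvSeq ω := by
  classical
  obtain ⟨ω', hω', hw⟩ := cs.exists_isReduced (cs.wordProd ω * cs.simple t)
  have hprod : cs.wordProd (ω'.concat t) = cs.wordProd ω := by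
    rw [wordProd_concat, ← hw, simple_mul_simple_cancel_right]
  have hred : cs.IsReduced (ω'.concat t) := by
    rw [IsReduced, hprod, ← cs.isRightDescent_iff.mp h, hw, hω'.eq]
    simp
  have hcount : (cs.rightInvSeq (ω'.concat t)).count (cs.simple t) = 1 :=
    List.count_eq_one_of_mem hred.nodup_rightInvSeq (by rw [rightInvSeq_concat]; simp)
  have h1 := cs.lift_signedConj_wordProd ω (cs.simple t) 0
  rw [← hprod, cs.lift_signedConj_wordProd, hcount] at h1
  have h2 := congr_arg Prod.snd h1
  by_contra hmem
  rw [List.count_eq_zero_of_not_mem hmem] at h2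
  simp at h2

theorem rightInvSeq_append (ω ω' : List B) :
    cs.rightInvSeq (ω ++ ω') =
      (cs.rightInvSeq ω).map (fun r => (cs.wordProd ω')⁻¹ * r * cs.wordProd ω') ++
        cs.rightInvSeq ω' := by
  induction ω with
  | nil => simp
  | cons i ω ih => simp [rightInvSeq, ih, wordProd_append, mul_assoc]

theorem exists_of_mem_rightInvSeq_alternatingWord {i j : B} {k : ℕ} {r : W}
    (hr : r ∈ cs.rightInvSeq (alternatingWord i j k)) :
    ∃ p < k, r = cs.simple j * (cs.simple i * cs.simple j) ^ p := by
  induction k generalizing i j r with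
  | zero => simp [alternatingWord] at hr
  | succ k ih =>
    rw [alternatingWord_succ, rightInvSeq_concat] at hr
    simp only [List.concat_eq_append, List.mem_append, List.mem_map, List.mem_singleton] at hr
    rcases hr with ⟨r', hr', rfl⟩ | rfl
    · obtain ⟨p, hp, rfl⟩ := ih hr'
      refine ⟨p + 1, by omega, ?_⟩
      have h : SemiconjBy (cs.simple j) (cs.simple i * cs.simple j) (cs.simple j * cs.simple i) :=
        (mul_assoc _ _ _).symm
      rw [(h.pow_right _).eq, pow_succ']
      simp [mul_assoc]
    · exact ⟨0, by omega, by simp⟩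

theorem simple_notMem_rightInvSeq_alternatingWord {i j : B} (hij : i ≠ j) {k : ℕ}
    (hk : M i j = 0 ∨ k < M i j) :
    cs.simple i ∉ cs.rightInvSeq (alternatingWord i j k) := by
  intro h
  obtain ⟨p, hp, hr⟩ := cs.exists_of_mem_rightInvSeq_alternatingWord h
  refine cs.simple_mul_simple_pow_ne_one hij (Nat.succ_pos p) (by omega) ?_
  rw [Nat.succ_eq_add_one, pow_succ', mul_assoc, ← hr, simple_mul_simple_self]

theorem isReduced_alternatingWord {i j : B} (hij : i ≠ j) {k : ℕ}
    (hk : M i j = 0 ∨ k ≤ M i j) : cs.IsReduced (alternatingWord i j k) := by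
  induction k generalizing i j with
  | zero => simp [alternatingWord, IsReduced]
  | succ k ih =>
    rw [M.symmetric] at hk
    have hred := ih hij.symm (by omega)
    have hnot : ¬ cs.IsRightDescent (cs.wordProd (alternatingWord j i k)) j := fun h =>
      cs.simple_notMem_rightInvSeq_alternatingWord hij.symm (by omega) h.mem_rightInvSeq
    rw [alternatingWord_succ, IsReduced, wordProd_concat, cs.not_isRightDescent_iff.mp hnot,
      hred.eq]
    simp

theorem length_longest {a b : B} (h : 3 ≤ M a b) : cs.length (longest cs a b) = M a b := by
  have hab : a ≠ b := by
    rintro rfl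
    simp at h
  rw [longest, (cs.isReduced_alternatingWord hab (Or.inr le_rfl)).eq, length_alternatingWord]

/-- An element with two distinct right descents `i`, `j` has a reduced factorization ending in any
reduced alternating word in `i` and `j`. -/
theorem exists_eq_mul_alternatingWord {w : W} {i j : B} (hij : i ≠ j)
    (hi : cs.IsRightDescent w i) (hj : cs.IsRightDescent w j) {k : ℕ}
    (hk : M i j = 0 ∨ k ≤ M i j) :
    ∃ u, w = u * cs.wordProd (alternatingWord i j k) ∧ cs.length w = cs.length u + k := by
  induction k generalizing i j with
  | zero => exact ⟨w, by simp [alternatingWord], rfl⟩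
  | succ k ih =>
    rw [M.symmetric] at hk
    obtain ⟨v, hw, hlen⟩ := ih hij.symm hj hi (by omega)
    obtain ⟨ω, hω, rfl⟩ := cs.exists_isReduced v
    rw [← wordProd_append] at hw
    have hmem := (hw ▸ hj : cs.IsRightDescent _ j).mem_rightInvSeq
    rw [rightInvSeq_append, List.mem_append] at hmem
    rcases hmem.symm with hmem | hmem
    · exact absurd hmem (cs.simple_notMem_rightInvSeq_alternatingWord hij.symm (by omega))
    · rw [List.mem_map] at hmem
      obtain ⟨r, hr, hrj⟩ := hmem
      have hlt := (cs.isRightInversion_of_mem_rightInvSeq hω hr).2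
      have hw' : w = cs.wordProd ω * r * cs.wordProd (alternatingWord i j (k + 1)) := by
        rw [alternatingWord_succ, wordProd_concat, ← hrj, hw, wordProd_append]
        have := (cs.isReflection_of_mem_rightInvSeq ω hr).mul_self
        simp only [mul_assoc, mul_inv_cancel_left]
        rw [← mul_assoc r r, this, one_mul]
      refine ⟨_, hw', ?_⟩
      have h1 := cs.length_mul_le (cs.wordProd ω * r) (cs.wordProd (alternatingWord i j (k + 1)))
      have h2 := cs.length_wordProd_le (alternatingWord i j (k + 1))
      rw [length_alternatingWord] at h2
      rw [← hw'] at h1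
      omega

theorem exists_eq_mul_longest {w : W} {i j : B} (hij : i ≠ j)
    (hi : cs.IsRightDescent w i) (hj : cs.IsRightDescent w j) :
    M i j ≠ 0 ∧ ∃ u, w = u * longest cs i j ∧ cs.length w = cs.length u + M i j := by
  refine ⟨fun h => ?_, cs.exists_eq_mul_alternatingWord hij hi hj (Or.inr le_rfl)⟩
  obtain ⟨u, -, hu⟩ :=
    cs.exists_eq_mul_alternatingWord hij hi hj (k := cs.length w + 1) (Or.inl h)
  omega

theorem longest_comm (a b : B) : longest cs a b = longest cs b a :=
  cs.wordProd_braidWord_eq a b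

theorem longest_inv (a b : B) : (longest cs a b)⁻¹ = longest cs a b := by
  have key : ∀ a b : B, ∀ k, (cs.wordProd (alternatingWord a b k))⁻¹ =
      cs.wordProd (alternatingWord a b k) ∨ (cs.wordProd (alternatingWord a b k))⁻¹ =
      cs.wordProd (alternatingWord b a k) := by
    intro a b k
    simp only [prod_alternatingWord_eq_mul_pow]
    split_ifs
    · right
      simp [← inv_pow]
    · left
      have h : SemiconjBy (cs.simple b) (cs.simple a * cs.simple b) (cs.simple b * cs.simple a) :=
        (mul_assoc _ _ _).symm
      rw [(h.pow_right _).eq]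
      simp [← inv_pow, (h.pow_right _).eq]
  rcases key a b (M a b) with h | h
  · exact h
  · rw [longest, h]
    nth_rw 1 [M.symmetric a b]
    exact cs.longest_comm b a

end CoxeterSystem

open CoxeterSystem

theorem isComplex_of_eq {a b : B} (hab : 3 ≤ M a b) {w x₁ x₂ : W}
    (hw : w = x₁ * longest cs a b * x₂)
    (hlen : cs.length x₁ + M a b + cs.length x₂ ≤ cs.length w) : IsComplex cs w := by
  refine ⟨a, b, hab, x₁, x₂, hw, le_antisymm ?_ (by rwa [cs.length_longest hab])⟩
  rw [hw]
  exact (cs.length_mul_le _ _).trans (Nat.add_le_add_right (cs.length_mul_le _ _) _)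

theorem IsComplex.of_factor {w u v x : W} (hx : IsComplex cs x) (hw : w = u * x * v)
    (hlen : cs.length u + cs.length x + cs.length v ≤ cs.length w) : IsComplex cs w := by
  obtain ⟨a, b, hab, x₁, x₂, rfl, hl⟩ := hx
  have h1 := cs.length_mul_le u x₁
  have h2 := cs.length_mul_le x₂ v
  rw [cs.length_longest hab] at hl
  exact isComplex_of_eq cs hab (x₁ := u * x₁) (x₂ := x₂ * v) (by simp [hw, mul_assoc]) (by omega)

theorem IsComplex.inv {w : W} (hw : IsComplex cs w) : IsComplex cs w⁻¹ := by
  obtain ⟨a, b, hab, x₁, x₂, rfl, hl⟩ := hw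
  refine ⟨a, b, hab, x₂⁻¹, x₁⁻¹, by simp [longest_inv, mul_assoc], ?_⟩
  simp only [length_inv]
  omega

theorem FullyComm.inv {w : W} (hw : FullyComm cs w) : FullyComm cs w⁻¹ := fun h =>
  hw (inv_inv w ▸ h.inv)

/-- Distinct right descents of a fully commutative element commute. -/
theorem FullyComm.commuting_descents {w : W} (hw : FullyComm cs w) {c t : B} (hct : c ≠ t)
    (hc : cs.IsRightDescent w c) (ht : cs.IsRightDescent w t) :
    M c t = 2 ∧ cs.IsRightDescent (w * cs.simple c) t := by
  obtain ⟨h0, u, hu, hlen⟩ := cs.exists_eq_mul_longest hct hc ht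
  have h1 := M.off_diagonal c t hct
  have h3 : ¬ 3 ≤ M c t := fun h3 =>
    hw (isComplex_of_eq cs h3 (x₁ := u) (x₂ := 1) (by simpa using hu) (by simp [hlen]))
  have h2 : M c t = 2 := by omega
  refine ⟨h2, ?_⟩
  have hl : longest cs c t = cs.simple t * cs.simple c := by
    rw [longest_comm, longest, M.symmetric, h2]
    simp [alternatingWord, wordProd]
  rw [hl] at hu
  have hw' : w * cs.simple c = u * cs.simple t := by simp [hu, mul_assoc]
  have hc' := cs.isRightDescent_iff.mp hc
  rw [IsRightDescent]
  rw [hw'] at hc' ⊢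
  rw [simple_mul_simple_cancel_right]
  omega

theorem simple_commute_of_eq_two {c t : B} (h : M c t = 2) :
    Commute (cs.simple c) (cs.simple t) := by
  have := cs.simple_mul_simple_pow c t
  rw [h, pow_two, mul_eq_one_iff_eq_inv, mul_inv_rev, inv_simple, inv_simple] at this
  exact this

theorem FullyComm.of_factor {w u v x : W} (hw : FullyComm cs w) (h : w = u * x * v)
    (hlen : cs.length u + cs.length x + cs.length v ≤ cs.length w) : FullyComm cs x :=
  fun hx => hw (hx.of_factor cs h hlen)

theorem FullyComm.isRightDescent_or {u : W} {ω : List B} {t : B}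
    (hw : FullyComm cs (u * cs.wordProd ω))
    (hlen : cs.length u + ω.length ≤ cs.length (u * cs.wordProd ω))
    (ht : cs.IsRightDescent (u * cs.wordProd ω) t) :
    cs.IsRightDescent (cs.wordProd ω) t ∨
      Commute (cs.simple t) (cs.wordProd ω) ∧ cs.IsRightDescent u t := by
  induction ω using List.reverseRecOn with
  | nil => right; simpa using ht
  | append_singleton ω c ih =>
    have hωc : cs.wordProd (ω ++ [c]) = cs.wordProd ω * cs.simple c := by simp [wordProd_append]
    have hlen1 := cs.length_mul_le u (cs.wordProd (ω ++ [c]))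
    rw [hωc, ← mul_assoc] at hw hlen ht hlen1
    rw [hωc]
    simp only [List.length_append, List.length_singleton] at hlen
    have hle1 := cs.length_mul_le (u * cs.wordProd ω) (cs.simple c)
    have hle2 := cs.length_mul_le u (cs.wordProd ω)
    have hle3 := cs.length_wordProd_le ω
    have hle4 := cs.length_mul_le (cs.wordProd ω) (cs.simple c)
    rw [length_simple] at hle1 hle4
    by_cases hct : c = t
    · subst hct
      left
      rw [IsRightDescent, simple_mul_simple_cancel_right]
      omega
    · have hc : cs.IsRightDescent (u * cs.wordProd ω * cs.simple c) c := by
        rw [IsRightDescent, simple_mul_simple_cancel_right]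
        omega
      obtain ⟨hM, ht'⟩ := hw.commuting_descents cs hct hc ht
      rw [simple_mul_simple_cancel_right] at ht'
      have hcomm := simple_commute_of_eq_two cs hM
      have hw' := hw.of_factor cs (u := 1) (v := cs.simple c) (x := u * cs.wordProd ω) (by simp)
        (by simp; omega)
      rcases ih hw' (by omega) ht' with h | ⟨h1, h2⟩
      · left
        rw [IsRightDescent] at h ⊢
        have hle5 := cs.length_mul_le (cs.wordProd ω * cs.simple t) (cs.simple c)
        rw [length_simple] at hle5
        rw [mul_assoc, hcomm.eq, ← mul_assoc]
        omega
      · exact Or.inr ⟨h1.mul_right hcomm.symm, h2⟩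

namespace CoxeterSystem

theorem length_alternatingWord_add_mul_le (a b : B) (n d : ℕ) (x : W) :
    cs.length (cs.wordProd (alternatingWord a b (n + d)) * x) ≤
      cs.length (cs.wordProd (alternatingWord a b n) * x) + d := by
  induction d with
  | zero => simp
  | succ d ih =>
    rw [← add_assoc, alternatingWord_succ', wordProd_cons, mul_assoc]
    have := cs.length_mul_le (cs.simple (if Even (n + d) then b else a))
      (cs.wordProd (alternatingWord a b (n + d)) * x)
    rw [length_simple] at this
    omega

theorem le_length_alternatingWord_mul {a b : B} {x : W}
    (h : M a b + cs.length x ≤ cs.length (longest cs a b * x)) {n : ℕ} (hn : n ≤ M a b) :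
    n + cs.length x ≤ cs.length (cs.wordProd (alternatingWord a b n) * x) := by
  have := cs.length_alternatingWord_add_mul_le a b n (M a b - n) x
  rw [Nat.add_sub_cancel' hn] at this
  change cs.length (longest cs a b * x) ≤ _ at this
  omega

theorem eq_simple_of_mem_rightInvSeq_longest {a b : B} {x r : W}
    (h : M a b + cs.length x ≤ cs.length (longest cs a b * x))
    (hr : r ∈ cs.rightInvSeq (alternatingWord a b (M a b)))
    (hrx : cs.length (r * x) ≤ cs.length x + 1) : r = cs.simple a ∨ r = cs.simple b := by
  obtain ⟨p, hp, hrp⟩ := cs.exists_of_mem_rightInvSeq_alternatingWord hr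
  have hr1 : r = cs.wordProd (alternatingWord a b (2 * p + 1)) := by
    rw [prod_alternatingWord_eq_mul_pow, if_neg (by simp), hrp]
    congr 2
    omega
  rcases le_or_gt (2 * p + 1) (M a b) with hle | hgt
  · have := cs.le_length_alternatingWord_mul h hle
    rw [← hr1] at this
    obtain rfl : p = 0 := by omega
    right
    simpa using hrp
  · rw [prod_alternatingWord_eq_prod_alternatingWord_sub _ _ _ _ (by omega)] at hr1
    rw [longest_comm] at h
    have := cs.le_length_alternatingWord_mul (n := M a b * 2 - (2 * p + 1))
      (by rwa [M.symmetric]) (by rw [M.symmetric b a]; omega)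
    rw [← hr1] at this
    left
    rw [hr1, show M a b * 2 - (2 * p + 1) = 1 by omega]
    simp [alternatingWord]

end CoxeterSystem

theorem Noncomm.not_commute {s t : B} (h : Noncomm M s t) :
    ¬ Commute (cs.simple s) (cs.simple t) := by
  intro hc
  have hst : s ≠ t := by
    rintro rfl
    simp [Noncomm] at h
  refine cs.simple_mul_simple_pow_ne_one hst two_pos ?_ ?_
  · rcases h with h | h
    · exact Or.inl h
    · exact Or.inr h
  · rw [pow_two]
    nth_rw 2 [hc.eq]
    simp [mul_assoc]

/-- If a longest element `w_{ab}` occurs in `w * s`, reduced, in such a way that appending `s`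
amounts to completing an alternating word to `w_{ab}`, then `w` has no right descent `t`
that fails to commute with `s` and to be a right descent of `w * s`. -/
theorem FullyComm.false_of_conj {w x₁ x₂ : W} (hw : FullyComm cs w) {s t a b : B}
    (hst : Noncomm M s t) (ht : cs.IsRightDescent w t)
    (ht' : ¬ cs.IsRightDescent (w * cs.simple s) t) (hab : 3 ≤ M a b)
    (hy : w * cs.simple s = x₁ * longest cs a b * x₂)
    (hlen : cs.length x₁ + M a b + cs.length x₂ ≤ cs.length w + 1)
    (hconj : x₂ * cs.simple s = cs.simple b * x₂)
    (hlen' : cs.length (w * cs.simple s) = cs.length w + 1) : False := by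
  have hMba := M.symmetric a b
  obtain ⟨m, hm⟩ : ∃ m, M a b = m + 3 := ⟨M a b - 3, by omega⟩
  have hL₁ : longest cs a b = cs.wordProd (alternatingWord b a (m + 2)) * cs.simple b := by
    rw [longest, hm, alternatingWord_succ, wordProd_concat]
  have hL₂ : longest cs a b = cs.wordProd (alternatingWord a b (m + 2)) * cs.simple a := by
    rw [longest_comm, longest, ← hMba, hm, alternatingWord_succ, wordProd_concat]
  obtain ⟨ω, hω, rfl⟩ := cs.exists_isReduced x₂
  have hwu : w = x₁ * cs.wordProd (alternatingWord b a (m + 2)) * cs.wordProd ω := by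
    rw [← cs.simple_mul_simple_cancel_right (w := w) s, hy, mul_assoc, hconj, hL₁]
    simp [mul_assoc]
  set z := x₁ * cs.wordProd (alternatingWord b a m) with hz
  have hu : x₁ * cs.wordProd (alternatingWord b a (m + 2)) = z * cs.simple b * cs.simple a := by
    rw [alternatingWord_succ, alternatingWord_succ, wordProd_concat, wordProd_concat, hz]
    simp only [mul_assoc]
  rw [hu] at hwu
  have hωlen := hω.eq
  have hzlen : cs.length z ≤ cs.length x₁ + m := by
    have h1 := cs.length_mul_le x₁ (cs.wordProd (alternatingWord b a m))
    have h2 := cs.length_wordProd_le (alternatingWord b a m)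
    rw [length_alternatingWord] at h2
    rw [← hz] at h1
    omega
  have hzb := cs.length_mul_le z (cs.simple b)
  have hzba := cs.length_mul_le (z * cs.simple b) (cs.simple a)
  have hzω := cs.length_mul_le (z * cs.simple b * cs.simple a) (cs.wordProd ω)
  rw [← hwu] at hzω
  rw [length_simple] at hzb hzba
  have hyt (p : W) (q : W) (hyp : w * cs.simple s * cs.simple t = p * q)
      (hp : cs.length p + cs.length q ≤ cs.length w) : False := by
    apply ht'
    have := cs.length_mul_le p q
    rw [IsRightDescent, hyp]
    omega
  rcases FullyComm.isRightDescent_or cs (u := z * cs.simple b * cs.simple a) (ω := ω) (t := t)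
    (hwu ▸ hw) (by rw [← hwu]; omega) (hwu ▸ ht) with h | ⟨hcomm, htu⟩
  · have h1 := cs.isRightDescent_iff.mp h
    refine hyt (x₁ * longest cs a b) (cs.wordProd ω * cs.simple t) (by rw [hy, mul_assoc]) ?_
    have := cs.length_mul_le x₁ (longest cs a b)
    rw [cs.length_longest hab] at this
    omega
  · have hfu : FullyComm cs (z * cs.simple b * cs.simple a) :=
      hw.of_factor cs (u := 1) (v := cs.wordProd ω) (by simpa using hwu) (by simp; omega)
    by_cases hat : a = t
    · subst hat
      refine hyt (x₁ * cs.wordProd (alternatingWord a b (m + 2))) (cs.wordProd ω) ?_ ?_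
      · rw [hy, hL₂]
        simp only [mul_assoc]
        rw [← hcomm.eq, simple_mul_simple_cancel_left]
      · have h1 := cs.length_mul_le x₁ (cs.wordProd (alternatingWord a b (m + 2)))
        have h2 := cs.length_wordProd_le (alternatingWord a b (m + 2))
        rw [length_alternatingWord] at h2
        omega
    · have hau : cs.IsRightDescent (z * cs.simple b * cs.simple a) a := by
        rw [IsRightDescent, simple_mul_simple_cancel_right]
        omega
      obtain ⟨hMat, htb⟩ := hfu.commuting_descents cs hat hau htu
      rw [simple_mul_simple_cancel_right] at htb
      have hfb : FullyComm cs (z * cs.simple b) :=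
        hfu.of_factor cs (u := 1) (v := cs.simple a) (by simp) (by simp; omega)
      have hbt : b ≠ t := by
        rintro rfl
        omega
      have hbb : cs.IsRightDescent (z * cs.simple b) b := by
        rw [IsRightDescent, simple_mul_simple_cancel_right]
        omega
      have hbtc := simple_commute_of_eq_two cs (hfb.commuting_descents cs hbt hbb htb).1
      refine hst.not_commute cs ?_
      have hs : cs.simple s = (cs.wordProd ω)⁻¹ * cs.simple b * cs.wordProd ω := by
        rw [mul_assoc, ← hconj, inv_mul_cancel_left]
      rw [hs]
      exact ((hcomm.symm.inv_left).mul_left hbtc).mul_left hcomm.symm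

/-- Upward right star operations preserve full commutativity. -/
theorem FullyComm.mul_simple {w : W} (hw : FullyComm cs w) {s t : B}
    (hst : Noncomm M s t) (hs : cs.IsRightDescent (w * cs.simple s) s)
    (ht : cs.IsRightDescent w t) (ht' : ¬ cs.IsRightDescent (w * cs.simple s) t) :
    FullyComm cs (w * cs.simple s) := by
  rintro ⟨a, b, hab, x₁, x₂, hy, hlen⟩
  have hlen' := cs.isRightDescent_iff.mp hs
  rw [simple_mul_simple_cancel_right] at hlen'
  rw [cs.length_longest hab] at hlen
  have hws : w = x₁ * longest cs a b * x₂ * cs.simple s := by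
    rw [← hy, simple_mul_simple_cancel_right]
  obtain ⟨ω₁, hω₁, rfl⟩ := cs.exists_isReduced x₁
  obtain ⟨ω₂, hω₂, rfl⟩ := cs.exists_isReduced x₂
  have hword : w * cs.simple s = cs.wordProd (ω₁ ++ alternatingWord a b (M a b) ++ ω₂) := by
    rw [hy, wordProd_append, wordProd_append, longest]
  have hmem := (hword ▸ hs : cs.IsRightDescent _ s).mem_rightInvSeq
  simp only [rightInvSeq_append, List.mem_append, List.mem_map] at hmem
  rcases hmem with ⟨r, hr | hr, hrs⟩ | hmem
  · obtain ⟨r', hr', rfl⟩ := hr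
    have h := (cs.isRightInversion_of_mem_rightInvSeq hω₁ hr').2
    refine hw (isComplex_of_eq cs hab (x₁ := cs.wordProd ω₁ * r') (x₂ := cs.wordProd ω₂) ?_
      (by omega))
    rw [hws, ← hrs, longest]
    simp only [mul_assoc, mul_inv_cancel_left]
  · have hconj : cs.wordProd ω₂ * cs.simple s = r * cs.wordProd ω₂ := by
      rw [← hrs]
      simp [mul_assoc]
    have hlong : M a b + cs.length (cs.wordProd ω₂) ≤
        cs.length (longest cs a b * cs.wordProd ω₂) := by
      have := cs.length_mul_le (cs.wordProd ω₁) (longest cs a b * cs.wordProd ω₂)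
      rw [← mul_assoc, ← hy] at this
      omega
    have hrx : cs.length (r * cs.wordProd ω₂) ≤ cs.length (cs.wordProd ω₂) + 1 := by
      rw [← hconj]
      simpa using cs.length_mul_le (cs.wordProd ω₂) (cs.simple s)
    rcases cs.eq_simple_of_mem_rightInvSeq_longest hlong hr hrx with rfl | rfl
    · rw [longest_comm] at hy
      rw [M.symmetric] at hlen hab
      exact hw.false_of_conj cs hst ht ht' hab hy (by omega) hconj hlen'.symm
    · exact hw.false_of_conj cs hst ht ht' hab hy (by omega) hconj hlen'.symm
  · have h := (cs.isRightInversion_of_mem_rightInvSeq hω₂ hmem).2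
    exact hw (isComplex_of_eq cs hab (hws.trans (mul_assoc _ _ _)) (by omega))

/-- Downward right star operations preserve full commutativity. -/
theorem FullyComm.of_mul_simple {w : W} (hw : FullyComm cs w) {s : B}
    (hs : cs.IsRightDescent w s) : FullyComm cs (w * cs.simple s) := by
  have := cs.isRightDescent_iff.mp hs
  exact hw.of_factor cs (u := 1) (v := cs.simple s) (by simp) (by simp; omega)

theorem FullyComm.of_rightStarReducible {w x : W} (hw : FullyComm cs w) {s t : B}
    (h : RightStarReducible cs s t w x) : FullyComm cs x := by
  rcases h with ⟨-, ⟨hs, -, rfl, -⟩ | ⟨ht, -, rfl, -⟩⟩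
  · exact hw.of_mul_simple cs hs
  · exact hw.of_mul_simple cs ht

theorem FullyComm.of_rightStarReducible_to {w y : W} (hw : FullyComm cs w) {s t : B}
    (h : RightStarReducible cs s t y w) : FullyComm cs y := by
  rcases h with ⟨hst, ⟨hs, ht', rfl, ht⟩ | ⟨ht, hs', rfl, hs⟩⟩
  · have := hw.mul_simple cs hst (s := s) (t := t)
    rw [simple_mul_simple_cancel_right] at this
    exact this hs ht ht'
  · have := hw.mul_simple cs (s := t) (t := s) (by rwa [Noncomm, M.symmetric])
    rw [simple_mul_simple_cancel_right] at this
    exact this ht hs hs'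

theorem LeftStarReducible.inv {s t : B} {y x : W} (h : LeftStarReducible cs s t y x) :
    RightStarReducible cs s t y⁻¹ x⁻¹ := by
  rcases h with ⟨hst, ⟨h1, h2, rfl, h4⟩ | ⟨h1, h2, rfl, h4⟩⟩
  · refine ⟨hst, Or.inl ⟨?_, ?_, by simp, ?_⟩⟩ <;> rwa [isRightDescent_inv_iff]
  · refine ⟨hst, Or.inr ⟨?_, ?_, by simp, ?_⟩⟩ <;> rwa [isRightDescent_inv_iff]

/-- Lemma 4.6: let `w` be fully commutative and `{s,t}` a pair of generators with
`m(s,t) ≥ 3`.  If `^*w` (respectively `_*w`, `w^*`, `w_*`) is defined, then it lies in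
`W_c`.  Equivalently: any element to which `w` is left or right star reducible (this is
`_*w`, resp. `w_*`), and any element that is left or right star reducible to `w` (this is
`^*w`, resp. `w^*`), is fully commutative. -/
theorem statement3 (w : W) (hw : FullyComm cs w) (s t : B) :
    (∀ x : W, LeftStarReducible cs s t w x → FullyComm cs x) ∧
    (∀ y : W, LeftStarReducible cs s t y w → FullyComm cs y) ∧
    (∀ x : W, RightStarReducible cs s t w x → FullyComm cs x) ∧
    (∀ y : W, RightStarReducible cs s t y w → FullyComm cs y) := by
  refine ⟨fun x h => ?_, fun y h => ?_, fun x h => hw.of_rightStarReducible cs h,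
    fun y h => hw.of_rightStarReducible_to cs h⟩
  · exact inv_inv x ▸ ((hw.inv cs).of_rightStarReducible cs (h.inv cs)).inv cs
  · exact inv_inv y ▸ ((hw.inv cs).of_rightStarReducible_to cs (h.inv cs)).inv cs
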